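/- arXiv:1102.4100 — 3 statements merged into one kernel-verified Lean document; each statement's English description precedes it below -/
import Mathlib

section
/- Let k, t, n be integers with k odd and 0 < k <= 2t+1 <= n. Then the instability of the majority colouring maj_t(k) of the n-hypercube equals 2t+1, i.e. inst(maj_t(k)) = 2t+1. -/
/-!
The colouring `maj t k` is monotone and takes opposite colours at antipodal points.

*Upper bound.* By monotonicity a jump recolours the point with the new value of the flipped entry
(`maj_flip`). Suppose a geodesic visits at step `i` a point `P i` of colour `b` having at most `t`
entries different from `b`; this is what lying in one of the two balls means. A jump before step
`i` towards the colour `!b`, or after step `i` away from `!b`, flips an entry at which `P i` is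
`!b`, and distinct steps flip distinct entries, so there are at most `t` jumps of this kind. The
jumps on either side of `i` alternate in direction and the end colours are opposite, so the total
is twice the number of these special jumps plus one (`jumps_eq_two_mul_add`), at most `2t+1`.
A geodesic that avoids both balls jumps only when it flips one of the first `k` entries, so it has
at most `k ≤ 2t+1` jumps.

*Lower bound.* Start at the point whose ones are the odd positions below `2t+1` and flip the
entries `0, 1, 2, …` in order. For `m ≤ 2t+1`, the `m`-th point has `t + m % 2` ones, and for odd
`m` the colour `1` has the majority in the first `k` entries. So the first `2t+1` steps all jump.
-/

open Finset

/-- The number of entries of a point of the hypercube equal to `1` (`true`). -/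
def onesCount {n : ℕ} (x : Fin n → Bool) : ℕ :=
  (univ.filter fun i => x i = true).card

/-- The number of entries of a point of the hypercube equal to `0` (`false`). -/
def zerosCount {n : ℕ} (x : Fin n → Bool) : ℕ :=
  (univ.filter fun i => x i = false).card

/-- `P` is a geodesic in the `n`-hypercube: consecutive points differ in exactly one
entry, and each of the `n` entries changes at exactly one step. -/
def IsGeodesic {n : ℕ} (P : Fin (n+1) → Fin n → Bool) : Prop :=
  ∃ σ : Equiv.Perm (Fin n), ∀ j : Fin n, ∀ ℓ : Fin n,
    P j.succ ℓ = if σ ℓ = j then !(P j.castSucc ℓ) else P j.castSucc ℓ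

/-- The number of jumps of the geodesic `P` in the colouring `f`. -/
def jumps {n : ℕ} (f : (Fin n → Bool) → Bool) (P : Fin (n+1) → Fin n → Bool) : ℕ :=
  (univ.filter fun j : Fin n => f (P j.succ) ≠ f (P j.castSucc)).card

/-- `inst f` is the maximum of `jumps f P` over all geodesics `P`. -/
noncomputable def inst {n : ℕ} (f : (Fin n → Bool) → Bool) : ℕ :=
  sSup {m | ∃ P : Fin (n+1) → Fin n → Bool, IsGeodesic P ∧ m = jumps f P}

/-- The number of `1`s among the first `k` entries of `x`. -/
def firstOnes {n : ℕ} (k : ℕ) (x : Fin n → Bool) : ℕ :=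
  (univ.filter fun i : Fin n => i.val < k ∧ x i = true).card

/-- The majority colouring `maj_t(k)` (for odd `k`): canonically `0` on `B_t(0^n)`,
`1` on `B_t(1^n)`, and elsewhere the majority colour of the first `k` entries. -/
def maj {n : ℕ} (t k : ℕ) (x : Fin n → Bool) : Bool :=
  if onesCount x ≤ t then false
  else if zerosCount x ≤ t then true
  else decide (k < 2 * firstOnes k x)

/-! ### Symmetry and monotonicity of the majority colouring -/

lemma onesCount_add_zerosCount {n : ℕ} (x : Fin n → Bool) :
    onesCount x + zerosCount x = n := by
  have h := card_filter_add_card_filter_not (s := (univ : Finset (Fin n))) (fun i => x i = true)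
  simpa [onesCount, zerosCount] using h

lemma onesCount_not {n : ℕ} (x : Fin n → Bool) :
    onesCount (fun i => !x i) = zerosCount x := by
  simp [onesCount, zerosCount]

lemma zerosCount_not {n : ℕ} (x : Fin n → Bool) :
    zerosCount (fun i => !x i) = onesCount x := by
  simp [onesCount, zerosCount]

lemma card_filter_val {n : ℕ} (p : ℕ → Prop) [DecidablePred p] :
    (univ.filter fun i : Fin n => p i.val).card = ((range n).filter p).card := by
  rw [card_filter, card_filter, Finset.sum_range]

lemma card_val_lt {n k : ℕ} (hk : k ≤ n) :
    (univ.filter fun i : Fin n => i.val < k).card = k := by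
  rw [Fin.card_filter_val_lt, min_eq_right hk]

lemma firstOnes_not {n k : ℕ} (hk : k ≤ n) (x : Fin n → Bool) :
    firstOnes k (fun i => !x i) + firstOnes k x = k := by
  have h := card_filter_add_card_filter_not (s := (univ.filter fun i : Fin n => i.val < k))
    (fun i => x i = true)
  rw [card_val_lt hk, filter_filter, filter_filter] at h
  simp only [firstOnes]
  simp only [Bool.not_eq_true, Bool.not_eq_eq_eq_not, Bool.not_true] at h ⊢
  omega

/-- Antipodal points have opposite colours. -/
lemma maj_not {n t k : ℕ} (hodd : Odd k) (hkn : k ≤ n) (hn : 2 * t + 1 ≤ n) (x : Fin n → Bool) :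
    maj t k (fun i => !x i) = !maj t k x := by
  have h1 := onesCount_add_zerosCount x
  have h2 := firstOnes_not hkn x
  obtain ⟨s, rfl⟩ := hodd
  unfold maj
  rw [onesCount_not, zerosCount_not]
  split_ifs
  · omega
  · rfl
  · rfl
  · rw [← decide_not, decide_eq_decide]
    omega

lemma maj_mono {n t k : ℕ} {x y : Fin n → Bool} (h : ∀ i, x i = true → y i = true)
    (hx : maj t k x = true) : maj t k y = true := by
  have h1 : onesCount x ≤ onesCount y :=
    card_le_card (monotone_filter_right _ fun i _ => h i)
  have h2 : firstOnes k x ≤ firstOnes k y :=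
    card_le_card (monotone_filter_right _ fun i _ hi => ⟨hi.1, h i hi.2⟩)
  have h3 := onesCount_add_zerosCount x
  have h4 := onesCount_add_zerosCount y
  unfold maj at *
  split_ifs at * <;> simp_all <;> omega

/-- If flipping the entry `a` changes the colour, then the colour agrees with that entry. -/
lemma maj_flip {n t k : ℕ} {x y : Fin n → Bool} (a : Fin n)
    (hy : ∀ l, y l = if l = a then !(x l) else x l)
    (hne : maj t k y ≠ maj t k x) : maj t k x = x a ∧ maj t k y = y a := by
  have hya : y a = !(x a) := by simpa using hy a
  cases hxa : x a
  · have := maj_mono (t := t) (k := k) (x := x) (y := y) (fun i hi => by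
      rw [hy]; split_ifs with h
      · rw [h, hxa] at hi; cases hi
      · exact hi)
    cases hx : maj t k x <;> cases hy' : maj t k y <;> simp_all
  · have := maj_mono (t := t) (k := k) (x := y) (y := x) (fun i hi => by
      rw [hy] at hi; split_ifs at hi with h
      · rw [h]; exact hxa
      · exact hi)
    cases hx : maj t k x <;> cases hy' : maj t k y <;> simp_all

/-- Off the two balls, only the first `k` entries matter. -/
lemma maj_congr_middle {n t k : ℕ} {x y : Fin n → Bool}
    (hx1 : t < onesCount x) (hx0 : t < zerosCount x)
    (hy1 : t < onesCount y) (hy0 : t < zerosCount y)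
    (h : ∀ i : Fin n, i.val < k → x i = y i) : maj t k x = maj t k y := by
  have : firstOnes k x = firstOnes k y := by
    unfold firstOnes
    congr 1
    ext i
    simp only [mem_filter, mem_univ, true_and]
    exact and_congr_right fun hi => by rw [h i hi]
  simp [maj, not_le.2 hx1, not_le.2 hx0, not_le.2 hy1, not_le.2 hy0, this]

/-! ### Upper bound -/

/-- Explicit form of a geodesic: after `m` steps exactly the entries `ℓ` with `σ ℓ < m` have been
flipped. -/
lemma geodesic_apply {n : ℕ} {P : Fin (n+1) → Fin n → Bool} {σ : Equiv.Perm (Fin n)}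
    (h : ∀ j : Fin n, ∀ l : Fin n,
      P j.succ l = if σ l = j then !(P j.castSucc l) else P j.castSucc l)
    (m : Fin (n+1)) (l : Fin n) :
    P m l = if (σ l).val < m.val then !(P 0 l) else P 0 l := by
  induction m using Fin.induction with
  | zero => simp
  | succ j ih =>
    rw [h, ih]
    simp only [Fin.ext_iff, Fin.val_castSucc, Fin.val_succ]
    split_ifs <;> first | rfl | omega

/-- For a `0`-`1` colour sequence `c` with `c i = b`, the number of colour changes is twice the
number of changes that lead towards `!b` before `i` or away from `!b` after `i`, plus a correction
for each end of the sequence that is not coloured `b`. -/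
lemma jumps_eq_two_mul_add (c : ℕ → Bool) (b : Bool) (n i : ℕ) (hi : i ≤ n) (hb : c i = b) :
    (((range n).filter fun j => c (j+1) ≠ c j).card : ℤ) =
      2 * (((range n).filter fun j => c (j+1) ≠ c j ∧
          (if j < i then c (j+1) else c j) ≠ b).card : ℤ)
        + (if c 0 = b then 0 else 1) + (if c n = b then 0 else 1) := by
  -- The signed indicator of `c j ≠ b`; the sign change at `i` is invisible since `c i = b`.
  let h : ℕ → ℤ := fun j => if c j = b then 0 else if j ≤ i then -1 else 1
  have key : ∀ j, (if c (j+1) ≠ c j then (1 : ℤ) else 0) =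
      2 * (if c (j+1) ≠ c j ∧ (if j < i then c (j+1) else c j) ≠ b then (1 : ℤ) else 0)
        + (h (j+1) - h j) := by
    intro j
    simp only [h]
    rcases lt_trichotomy j i with hj | hj | hj
    · have h1 : j ≤ i := hj.le
      have h2 : j + 1 ≤ i := hj
      simp only [hj, h1, h2, if_true]
      cases c j <;> cases c (j+1) <;> cases b <;> simp
    · subst hj
      simp only [hb, lt_irrefl, if_false]
      cases c (j+1) <;> cases b <;> simp
    · have h0 : ¬ j < i := by omega
      have h1 : ¬ j ≤ i := by omega
      have h2 : ¬ j + 1 ≤ i := by omega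
      simp only [h0, h1, h2, if_false]
      cases c j <;> cases c (j+1) <;> cases b <;> simp
  have hsum := Finset.sum_congr (rfl : range n = range n) (fun j _ => key j)
  rw [Finset.sum_add_distrib, ← Finset.mul_sum, Finset.sum_range_sub, Finset.sum_boole,
    Finset.sum_boole] at hsum
  rw [hsum]
  have h0 : h 0 = -(if c 0 = b then 0 else 1) := by
    simp only [h]; split_ifs <;> simp_all
  have hn : h n = (if c n = b then 0 else 1) := by
    simp only [h]
    split_ifs with h1 h2
    · rfl
    · exact absurd (by rw [le_antisymm h2 hi, hb]) h1
    · rfl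
  rw [h0, hn]
  ring

/-- Reindexing of the jumps by natural numbers. -/
lemma jumps_eq_range {n : ℕ} (f : (Fin n → Bool) → Bool) (P : Fin (n+1) → Fin n → Bool)
    (c : ℕ → Bool) (hc : ∀ m : Fin (n+1), c m.val = f (P m)) :
    jumps f P = ((range n).filter fun j => c (j+1) ≠ c j).card := by
  unfold jumps
  rw [← card_filter_val (fun j => c (j+1) ≠ c j)]
  congr 1
  ext j
  rw [mem_filter, mem_filter, ← hc, ← hc, Fin.val_succ, Fin.val_castSucc]

/-- A geodesic passing through a point of colour `b` with at most `t` entries different from `b`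
has at most `2t+1` jumps. -/
lemma jumps_le_of_ball {n t k : ℕ} (hodd : Odd k) (hkn : k ≤ n) (hn : 2 * t + 1 ≤ n)
    {P : Fin (n+1) → Fin n → Bool} {σ : Equiv.Perm (Fin n)}
    (h : ∀ j : Fin n, ∀ l : Fin n,
      P j.succ l = if σ l = j then !(P j.castSucc l) else P j.castSucc l)
    (i : Fin (n+1)) (b : Bool) (hb : maj t k (P i) = b)
    (ht : (univ.filter fun l => P i l ≠ b).card ≤ t) :
    jumps (maj t k) P ≤ 2 * t + 1 := by
  have happ := geodesic_apply h
  let c : ℕ → Bool := fun m => if hm : m < n + 1 then maj t k (P ⟨m, hm⟩) else false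
  have hc : ∀ m : Fin (n+1), c m.val = maj t k (P m) := fun m => dif_pos m.2
  have hlast : c n = !c 0 := by
    have e0 := hc 0
    have e1 := hc (Fin.last n)
    simp only [Fin.val_zero, Fin.val_last] at e0 e1
    rw [e0, e1, ← maj_not hodd hkn hn]
    congr 1
    ext l
    rw [happ]
    simp
  have hB : ((range n).filter fun j => c (j+1) ≠ c j ∧
      (if j < i.val then c (j+1) else c j) ≠ b).card ≤ t := by
    rw [← card_filter_val (fun j => c (j+1) ≠ c j ∧ (if j < i.val then c (j+1) else c j) ≠ b)]
    refine le_trans ?_ ht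
    -- Send each step to the entry it flips.
    refine card_le_card_of_injOn σ.symm ?_ σ.symm.injective.injOn
    intro j hj
    simp only [coe_filter, mem_univ, true_and, Set.mem_ofPred_eq] at hj ⊢
    obtain ⟨hne, hj⟩ := hj
    have e1 : c (j.val+1) = maj t k (P j.succ) := hc j.succ
    have e0 : c j.val = maj t k (P j.castSucc) := hc j.castSucc
    rw [e1, e0] at hne hj
    obtain ⟨f0, f1⟩ := maj_flip (σ.symm j) (fun l => by
      rw [h]; simp only [Equiv.eq_symm_apply]) hne
    rw [f0, f1, happ j.succ, happ j.castSucc] at hj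
    rw [happ i]
    simp only [Equiv.apply_symm_apply, Fin.val_succ, Fin.val_castSucc, lt_irrefl, if_false,
      Nat.lt_succ_self, if_true] at hj ⊢
    exact hj
  have hJ := jumps_eq_two_mul_add c b n i.val (Nat.lt_succ_iff.1 i.2) (by rw [hc, hb])
  rw [jumps_eq_range _ P c hc]
  rw [hlast] at hJ
  have : (if c 0 = b then (0 : ℤ) else 1) + (if (!c 0) = b then 0 else 1) = 1 := by
    cases c 0 <;> cases b <;> simp
  omega

/-- A geodesic avoiding both balls jumps only when flipping one of the first `k` entries. -/
lemma jumps_le_of_middle {n t k : ℕ} (hkn : k ≤ n)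
    {P : Fin (n+1) → Fin n → Bool} {σ : Equiv.Perm (Fin n)}
    (h : ∀ j : Fin n, ∀ l : Fin n,
      P j.succ l = if σ l = j then !(P j.castSucc l) else P j.castSucc l)
    (hm : ∀ i, t < onesCount (P i) ∧ t < zerosCount (P i)) :
    jumps (maj t k) P ≤ k := by
  conv_rhs => rw [← card_val_lt hkn]
  refine card_le_card_of_injOn σ.symm ?_ σ.symm.injective.injOn
  intro j hj
  simp only [coe_filter, mem_univ, true_and, Set.mem_ofPred_eq] at hj ⊢
  by_contra hlt
  refine hj (maj_congr_middle (hm _).1 (hm _).2 (hm _).1 (hm _).2 fun l hl => ?_)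
  rw [h, if_neg]
  rintro rfl
  simp at hlt
  omega

lemma jumps_le {n t k : ℕ} (hodd : Odd k) (hk2t : k ≤ 2 * t + 1) (hn : 2 * t + 1 ≤ n)
    {P : Fin (n+1) → Fin n → Bool} (hP : IsGeodesic P) :
    jumps (maj t k) P ≤ 2 * t + 1 := by
  obtain ⟨σ, h⟩ := hP
  have hkn := hk2t.trans hn
  by_cases hm : ∀ i, t < onesCount (P i) ∧ t < zerosCount (P i)
  · exact (jumps_le_of_middle hkn h hm).trans hk2t
  · push Not at hm
    obtain ⟨i, hi⟩ := hm
    by_cases h1 : onesCount (P i) ≤ t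
    · exact jumps_le_of_ball hodd hkn hn h i false (by simp [maj, h1])
        (by simpa [onesCount] using h1)
    · have h0 := hi (not_le.1 h1)
      exact jumps_le_of_ball hodd hkn hn h i true (by simp [maj, h1, h0])
        (by simpa [zerosCount] using h0)

/-! ### Lower bound -/

/-- The extremal geodesic: it starts at the point whose ones are the odd positions below `2t+1`
and flips the entries in increasing order. -/
def zigzag (n t : ℕ) (m : Fin (n+1)) (l : Fin n) : Bool :=
  if l.val < m.val then !decide (l.val % 2 = 1 ∧ l.val < 2 * t + 1)
  else decide (l.val % 2 = 1 ∧ l.val < 2 * t + 1)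

lemma zigzag_isGeodesic (n t : ℕ) : IsGeodesic (zigzag n t) := by
  refine ⟨Equiv.refl _, fun j l => ?_⟩
  simp only [zigzag, Equiv.refl_apply, Fin.ext_iff, Fin.val_castSucc, Fin.val_succ]
  split_ifs <;> first | rfl | omega

/-- Among the positions below `min N K`, count the even ones below `m` and the odd ones from `m`
on. -/
lemma card_zigzag (m K N : ℕ) :
    ((range N).filter fun l => l < K ∧ (if l < m then l % 2 = 0 else l % 2 = 1)).card =
      (min (min N K) m + 1) / 2 + (min N K) / 2 - (min (min N K) m) / 2 := by
  induction N with
  | zero => simp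
  | succ N ih =>
    rw [range_add_one, filter_insert]
    split_ifs with h1 h2 h2
    all_goals first
      | (rw [card_insert_of_notMem (by simp), ih]; omega)
      | (rw [ih]; omega)

lemma zigzag_eq_true {n t : ℕ} {m : Fin (n+1)} (hm : m.val ≤ 2 * t + 1) (l : Fin n) :
    zigzag n t m l = true ↔
      l.val < 2 * t + 1 ∧ (if l.val < m.val then l.val % 2 = 0 else l.val % 2 = 1) := by
  unfold zigzag
  split_ifs <;> simp <;> omega

lemma onesCount_zigzag {n t : ℕ} (hn : 2 * t + 1 ≤ n) {m : Fin (n+1)}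
    (hm : m.val ≤ 2 * t + 1) : onesCount (zigzag n t m) = t + m.val % 2 := by
  have h := card_zigzag m.val (2 * t + 1) n
  unfold onesCount
  simp only [zigzag_eq_true hm]
  rw [card_filter_val (fun l => l < 2 * t + 1 ∧ (if l < m.val then l % 2 = 0 else l % 2 = 1)), h]
  omega

lemma firstOnes_zigzag {n t k : ℕ} (hodd : Odd k) (hk2t : k ≤ 2 * t + 1) (hn : 2 * t + 1 ≤ n)
    {m : Fin (n+1)} (hm : m.val ≤ 2 * t + 1) (hmodd : m.val % 2 = 1) :
    k < 2 * firstOnes k (zigzag n t m) := by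
  have h := card_zigzag m.val k n
  have e : firstOnes k (zigzag n t m) = (univ.filter fun l : Fin n =>
      l.val < k ∧ (if l.val < m.val then l.val % 2 = 0 else l.val % 2 = 1)).card := by
    unfold firstOnes
    congr 1
    ext l
    simp only [mem_filter, mem_univ, true_and, zigzag_eq_true hm]
    exact ⟨fun hl => ⟨hl.1, hl.2.2⟩, fun hl => ⟨hl.1, hl.1.trans_le hk2t, hl.2⟩⟩
  rw [e, card_filter_val (fun l => l < k ∧ (if l < m.val then l % 2 = 0 else l % 2 = 1)), h]
  obtain ⟨s, rfl⟩ := hodd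
  omega

lemma maj_zigzag {n t k : ℕ} (hodd : Odd k) (hk2t : k ≤ 2 * t + 1) (hn : 2 * t + 1 ≤ n)
    {m : Fin (n+1)} (hm : m.val ≤ 2 * t + 1) :
    maj t k (zigzag n t m) = decide (m.val % 2 = 1) := by
  have h1 := onesCount_zigzag hn hm
  rcases Nat.mod_two_eq_zero_or_one m.val with h | h
  · simp [maj, h1, h]
  · have h2 := firstOnes_zigzag hodd hk2t hn hm h
    simp [maj, h1, h, h2]

lemma le_jumps_zigzag {n t k : ℕ} (hodd : Odd k) (hk2t : k ≤ 2 * t + 1) (hn : 2 * t + 1 ≤ n) :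
    2 * t + 1 ≤ jumps (maj t k) (zigzag n t) := by
  conv_lhs => rw [← card_val_lt hn]
  refine card_le_card (monotone_filter_right _ fun j _ hj => ?_)
  have hj' : j.val < 2 * t + 1 := hj
  rw [maj_zigzag hodd hk2t hn (m := j.succ) (by simp; omega),
    maj_zigzag hodd hk2t hn (m := j.castSucc) (by simp; omega)]
  simp only [Fin.val_succ, Fin.val_castSucc, ne_eq, decide_eq_decide]
  omega

/-- For `k` odd with `0 < k ≤ 2t+1 ≤ n`, the instability of the majority colouring
`maj_t(k)` of the `n`-hypercube equals `2t+1`. -/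
theorem inst_maj_eq (n t k : ℕ) (hodd : Odd k) (hk : 0 < k) (hk2t : k ≤ 2 * t + 1)
    (hn : 2 * t + 1 ≤ n) :
    inst (maj (n := n) t k) = 2 * t + 1 := by
  refine IsGreatest.csSup_eq ⟨⟨zigzag n t, zigzag_isGeodesic n t, ?_⟩, ?_⟩
  · exact le_antisymm (le_jumps_zigzag hodd hk2t hn)
      (jumps_le hodd hk2t hn (zigzag_isGeodesic n t))
  · rintro m ⟨P, hP, rfl⟩
    exact jumps_le hodd hk2t hn hP
end

section
/- Let n be a positive integer and t >= 1 with n >= 2t+1. Then every colouring f of H_n that respects B_t(0^n) and B_t(1^n) satisfies inst(f) >= floor((t-1)/(n-2t)) + ceil((t-1)/(n-2t)) + 3; that is, inst(n,t) >= floor((t-1)/(n-2t)) + ceil((t-1)/(n-2t)) + 3. -/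
/-!
Identify points of the hypercube with subsets of `Fin n` and put `d = n - 2 t`, `q = (t-1) / d`.
From a set of colour `0` a path can climb to level `n - t` (colour `1`) and then alternate `d`
removals with `d` additions, each such block giving a jump (`Walk.climb`); the only constraint is
that no element is toggled twice. What matters is how many jumps precede this zigzag.

* If `d` divides `t - 1`, take a smallest set `A` of colour `1` and start with
  `A \ {a}`, `A`, `A \ {b}` (colours `0, 1, 0`). What remains allows `q` descents and ascents, for
  a total of `2 q + 3` jumps.
* Otherwise `2 q + 4` jumps are needed. They come from `Z ⊆ Y` and distinct `x, b ∉ Y` for which the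
  path `Z ∪ {x, b}`, `Z ∪ {b}`, ..., `Y ∪ {b}`, `Y` has colours `1, 0, 1, 0`; again `q` descents and
  ascents fit afterwards.

Such a configuration (`RepeatedRise`) exists in every interval `[L, U]` of sets coloured `0` at `L`
and just above it and `1` at `U` and just below it (`repeatedRise_of_interval`). In a minimal
counterexample every `y ∈ U \ L` has partners `m₁ y, m₀ y ≠ y` in `U \ L` such that `L ∪ {y, m₁ y}` has colour `1`
and `U \ {y, m₀ y}` has colour `0`. Without a repeated rise, `P ∪ {y}` can have colour `1` and `P`
colour `0` only if `m₁ y ∈ P` and `m₀ y ∉ P`, and `m₁` is then an involution. Going along the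
alternating orbits of `m₁` and `m₀` one adds all elements of `U \ L` to `L` without ever changing
the colour from `0` to `1`, which is absurd (`no_rise_false`).
-/


open Finset

/-- `f` respects the balls `B_t(0^n)` and `B_t(1^n)`: it is `0` on all points with at
most `t` ones and `1` on all points with at most `t` zeros. -/
def Respects {n : ℕ} (t : ℕ) (f : (Fin n → Bool) → Bool) : Prop :=
  (∀ x, onesCount x ≤ t → f x = false) ∧ (∀ x, zerosCount x ≤ t → f x = true)

/-- `t_f = t`: `t` is the largest radius whose balls `f` respects. -/
def tfEq {n : ℕ} (f : (Fin n → Bool) → Bool) (t : ℕ) : Prop :=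
  Respects t f ∧ ¬ Respects (t+1) f

/-- `winst t f`: the maximum number of jumps of `f` over all well-ending
`(t+1)`-geodesics (those starting with exactly `t+1` ones, whose first point has
colour `1` or whose last point has colour `0`). -/
noncomputable def winst {n : ℕ} (t : ℕ) (f : (Fin n → Bool) → Bool) : ℕ :=
  sSup {m | ∃ P : Fin (n+1) → Fin n → Bool, IsGeodesic P ∧ onesCount (P 0) = t + 1 ∧
    (f (P 0) = true ∨ f (P (Fin.last n)) = false) ∧ m = jumps f P}

/-! ### Repeated rises in an interval of sets -/

/-- A *repeated rise* of the colouring `g` of finite sets: adding `x` to `Z ∪ {b}` changes the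
colour from `0` to `1`, and so does adding `b` to some `Y ⊇ Z` that avoids `x`. -/
def RepeatedRise {α : Type*} [DecidableEq α] (g : Finset α → Bool) : Prop :=
  ∃ Z Y : Finset α, ∃ x b : α, Z ⊆ Y ∧ x ∉ Y ∧ b ∉ Y ∧ x ≠ b ∧
    g (insert b Z) = false ∧ g (insert x (insert b Z)) = true ∧
    g Y = false ∧ g (insert b Y) = true

/-- The situation left over by the induction in `repeatedRise_of_interval` is contradictory: if
every rise from `P` to `P ∪ {y}` inside `[L, U]` has `m₁ y ∈ P` and `m₀ y ∉ P`, where `m₁` is an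
involution on `U \ L`, then the elements can be added to `L` in an order that never rises. -/
lemma no_rise_false {α : Type*} [DecidableEq α] (g : Finset α → Bool) (L U : Finset α)
    (hLU : L ⊆ U) (hL : g L = false) (hU : g U = true) (m₁ m₀ : α → α)
    (h₁D : ∀ v ∈ U \ L, m₁ v ∈ U \ L) (h₁i : ∀ v ∈ U \ L, m₁ (m₁ v) = v)
    (h₀D : ∀ v ∈ U \ L, m₀ v ∈ U \ L) (h₀n : ∀ v ∈ U \ L, m₀ v ≠ v)
    (hp₁ : ∀ P y, L ⊆ P → P ⊆ U → y ∈ U \ L → y ∉ P → m₁ y ∉ P → g P = false →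
      g (insert y P) = false)
    (hp₀ : ∀ P y, L ⊆ P → P ⊆ U → y ∈ U \ L → y ∉ P → m₀ y ∈ P → g P = false →
      g (insert y P) = false) : False := by
  classical
  -- A largest set of colour `0` that is closed under `m₁`, up to one element.
  obtain ⟨P, hP, hmax⟩ := Finset.exists_max_image
    (U.powerset.filter fun P => L ⊆ P ∧ g P = false ∧
      ∀ y ∈ P \ L, ∀ z ∈ P \ L, m₁ y ∉ P → m₁ z ∉ P → y = z) Finset.card
    ⟨L, by simp +contextual [hLU, hL]⟩
  simp only [mem_filter, mem_powerset] at hP hmax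
  obtain ⟨hPU, hLP, hgP, hinv⟩ := hP
  have key : ∀ Q, Q ⊆ U → P ⊂ Q → g Q = false →
      (∀ y ∈ Q \ L, ∀ z ∈ Q \ L, m₁ y ∉ Q → m₁ z ∉ Q → y = z) → False := by
    intro Q hQU hPQ hgQ hi
    exact absurd (hmax Q ⟨hQU, hLP.trans hPQ.1, hgQ, hi⟩) (not_le.2 (Finset.card_lt_card hPQ))
  have hPD : ∀ v ∈ P \ L, v ∈ U \ L := fun v hv => by
    rw [mem_sdiff] at hv ⊢; exact ⟨hPU hv.1, hv.2⟩
  have hout : ∀ v ∈ U \ L, v ∉ P → insert v P ⊆ U := fun v hv _ =>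
    Finset.insert_subset (mem_sdiff.1 hv).1 hPU
  by_cases hcl : ∀ y ∈ P \ L, m₁ y ∈ P
  · -- `P` is closed: any missing element can be added.
    have hne : P ≠ U := fun h => by rw [h, hU] at hgP; exact absurd hgP (by simp)
    obtain ⟨y, hyU, hyP⟩ := Finset.exists_of_ssubset (Finset.ssubset_iff_subset_ne.2 ⟨hPU, hne⟩)
    have hyD : y ∈ U \ L := mem_sdiff.2 ⟨hyU, fun h => hyP (hLP h)⟩
    have hmy : m₁ y ∉ P := fun h => hyP <| by
      have := hcl (m₁ y) (mem_sdiff.2 ⟨h, (mem_sdiff.1 (h₁D y hyD)).2⟩)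
      rwa [h₁i y hyD] at this
    refine key (insert y P) (hout y hyD hyP) (Finset.ssubset_insert hyP)
      (hp₁ P y hLP hPU hyD hyP hmy hgP) ?_
    have : ∀ a ∈ insert y P \ L, m₁ a ∉ insert y P → a = y := by
      intro a ha hma
      by_contra hne
      exact hma (mem_insert_of_mem (hcl a (by simp only [mem_sdiff, mem_insert] at ha ⊢; tauto)))
    intro a ha c hc hma hmc
    rw [this a ha hma, this c hc hmc]
  · push Not at hcl
    obtain ⟨y, hy, hmy⟩ := hcl
    have hyD := hPD y hy
    have hyP := (mem_sdiff.1 hy).1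
    have hxD := h₁D y hyD
    have hcl : ∀ a ∈ P \ L, a ≠ y → m₁ a ∈ P := fun a ha hne => by
      by_contra h
      exact hne (hinv a ha y hy h hmy)
    have hxi := h₁i y hyD
    generalize m₁ y = x at *
    by_cases hz : m₀ x ∈ P
    · -- The partner `x` of `y` can be added at once.
      refine key (insert x P) (hout x hxD hmy) (Finset.ssubset_insert hmy)
        (hp₀ P x hLP hPU hxD hmy hz hgP) ?_
      have : ∀ a ∈ insert x P \ L, m₁ a ∈ insert x P := by
        intro a ha
        rcases eq_or_ne a x with rfl | hax
        · rw [hxi]; exact mem_insert_of_mem hyP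
        rcases eq_or_ne a y with rfl | hay
        · have := h₁i x hxD
          rw [hxi] at this
          rw [this]; exact mem_insert_self _ _
        · exact mem_insert_of_mem (hcl a
          (by simp only [mem_sdiff, mem_insert] at ha ⊢; tauto) hay)
      intro a ha c hc hma
      exact absurd (this a ha) hma
    · -- First add `m₀ x`, which makes `x` safe to add.
      have hzD := h₀D x hxD
      have hzx := h₀n x hxD
      have h0 : ∀ Q, L ⊆ Q → Q ⊆ U → x ∉ Q → m₀ x ∈ Q → g Q = false →
        g (insert x Q) = false := fun Q h1 h2 h3 h4 h5 => hp₀ Q x h1 h2 hxD h3 h4 h5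
      generalize m₀ x = z at *
      have hyx : m₁ x = y := hxi
      have hxy : m₁ y = x := by rw [← hyx]; exact h₁i x hxD
      have hmz : m₁ z ∉ P := fun h => by
        rcases eq_or_ne (m₁ z) y with h' | h'
        · have := h₁i z hzD
          rw [h', hxy] at this
          exact hzx this.symm
        · have := hcl (m₁ z) (mem_sdiff.2 ⟨h, (mem_sdiff.1 (h₁D z hzD)).2⟩) h'
          rw [h₁i z hzD] at this
          exact hz this
      have hg1 := hp₁ P z hLP hPU hzD hz hmz hgP
      have hxz : x ∉ insert z P := by simp [hmy, hzx.symm]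
      have hg2 := h0 (insert z P) (hLP.trans (subset_insert _ _)) (hout z hzD hz) hxz
        (mem_insert_self _ _) hg1
      refine key (insert x (insert z P))
        (Finset.insert_subset (mem_sdiff.1 hxD).1 (hout z hzD hz))
        ((Finset.ssubset_insert hz).trans (Finset.ssubset_insert hxz)) hg2 ?_
      have : ∀ a ∈ insert x (insert z P) \ L, m₁ a ∉ insert x (insert z P) → a = z := by
        intro a ha hma
        by_contra hne
        apply hma
        rcases eq_or_ne a x with rfl | hax
        · rw [hyx]; simp [hyP]
        rcases eq_or_ne a y with rfl | hay
        · rw [hxy]; simp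
        · have := hcl a (by simp only [mem_sdiff, mem_insert] at ha ⊢; tauto) hay
          simp [this]
      intro a ha c hc hma hmc
      rw [this a ha hma, this c hc hmc]

/-- A colouring of an interval `[L, U]` of finite sets that is `0` at `L` and at its upper
neighbours and `1` at `U` and at its lower neighbours has a repeated rise. By induction on the
size of the interval, one may assume that neither raising `L` nor lowering `U` by one element
preserves the hypotheses; this supplies `m₁` and `m₀` for `no_rise_false`. -/
lemma repeatedRise_of_interval {α : Type*} [DecidableEq α] (g : Finset α → Bool) (k : ℕ) :
    ∀ L U : Finset α, (U \ L).card = k → L ⊆ U → g L = false → g U = true →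
    (∀ v ∈ U \ L, g (insert v L) = false) → (∀ v ∈ U \ L, g (U.erase v) = true) →
    RepeatedRise g := by
  induction k with
  | zero =>
    intro L U hk hLU hL hU _ _
    have : U ⊆ L := by simpa using hk
    rw [Finset.Subset.antisymm hLU this, hU] at hL
    exact absurd hL (by simp)
  | succ k ih =>
    intro L U hk hLU hL hU hLv hUv
    by_contra hno
    obtain ⟨e₀, -⟩ : (U \ L).Nonempty := Finset.card_pos.1 (by omega)
    have : Nonempty α := ⟨e₀⟩
    have h₁ : ∀ e ∈ U \ L, ∃ v ∈ U \ L, v ≠ e ∧ g (insert v (insert e L)) = true := by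
      intro e he
      by_contra hcon
      push Not at hcon
      have hsub : U \ insert e L = (U \ L).erase e := by
        ext a; simp only [mem_sdiff, mem_insert, mem_erase]; tauto
      refine hno (ih (insert e L) U ?_ (Finset.insert_subset (mem_sdiff.1 he).1 hLU) (hLv e he) hU
        ?_ ?_)
      · rw [hsub, Finset.card_erase_of_mem he, hk]; rfl
      · intro v hv
        rw [hsub, mem_erase] at hv
        simpa using hcon v hv.2 hv.1
      · intro v hv
        rw [hsub, mem_erase] at hv
        exact hUv v hv.2
    have h₀ : ∀ e ∈ U \ L, ∃ w ∈ U \ L, w ≠ e ∧ g ((U.erase e).erase w) = false := by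
      intro e he
      by_contra hcon
      push Not at hcon
      have hsub : U.erase e \ L = (U \ L).erase e := by
        ext a; simp only [mem_sdiff, mem_erase]; tauto
      refine hno (ih L (U.erase e) ?_
        (Finset.subset_erase.2 ⟨hLU, (mem_sdiff.1 he).2⟩) hL (hUv e he) ?_ ?_)
      · rw [hsub, Finset.card_erase_of_mem he, hk]; rfl
      · intro v hv
        rw [hsub, mem_erase] at hv
        exact hLv v hv.2
      · intro v hv
        rw [hsub, mem_erase] at hv
        simpa using hcon v hv.2 hv.1
    have hr₁ : ∀ P y v, L ⊆ P → P ⊆ U → y ∈ U \ L → y ∉ P → v ∉ P → v ≠ y →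
        g (insert v (insert y L)) = true → g P = false → g (insert y P) = false := by
      intro P y v hLP hPU hy hyP hvP hvy hgv hgP
      by_contra h
      exact hno ⟨L, P, v, y, hLP, hvP, hyP, hvy, hLv y hy, hgv, hgP, by simpa using h⟩
    have hr₀ : ∀ P y w, L ⊆ P → P ⊆ U → y ∈ U \ L → y ∉ P → w ∈ P → w ≠ y →
        g ((U.erase y).erase w) = false → g P = false → g (insert y P) = false := by
      intro P y w hLP hPU hy hyP hwP hwy hgw hgP
      by_contra h
      refine hno ⟨P.erase w, (U.erase y).erase w, y, w,
        Finset.erase_subset_erase _ (Finset.subset_erase.2 ⟨hPU, hyP⟩), by simp, by simp, hwy.symm,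
        ?_, ?_, hgw, ?_⟩
      · rwa [Finset.insert_erase hwP]
      · rw [Finset.insert_erase hwP]; simpa using h
      · rw [Finset.insert_erase (mem_erase.2 ⟨hwy, hPU hwP⟩)]; exact hUv y hy
    choose! m₁ h₁D h₁n h₁g using h₁
    choose! m₀ h₀D h₀n h₀g using h₀
    refine no_rise_false g L U hLU hL hU m₁ m₀ h₁D ?_ h₀D h₀n ?_ ?_
    · -- Adding `m₁ v` to `L ∪ {v}` rises, so the partner of `m₁ v` must lie in `L ∪ {v}`.
      intro v hv
      by_contra hne
      have hmD := h₁D v hv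
      have hmmD := h₁D _ hmD
      have := hr₁ (insert v L) (m₁ v) (m₁ (m₁ v)) (subset_insert _ _)
        (Finset.insert_subset (mem_sdiff.1 hv).1 hLU) hmD
        (by simp [h₁n v hv, (mem_sdiff.1 hmD).2]) (by simp [hne, (mem_sdiff.1 hmmD).2])
        (h₁n _ hmD) (h₁g _ hmD) (hLv v hv)
      rw [h₁g v hv] at this
      exact absurd this (by simp)
    · intro P y hLP hPU hy hyP hm hgP
      exact hr₁ P y (m₁ y) hLP hPU hy hyP hm (h₁n y hy) (h₁g y hy) hgP
    · intro P y hLP hPU hy hyP hm hgP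
      exact hr₀ P y (m₀ y) hLP hPU hy hyP hm (h₀n y hy) (h₀g y hy) hgP

/-! ### Walks and the zigzag -/

/-- The set reached from `S` by toggling the elements of a list one after the other. -/
def toggle {α : Type*} [DecidableEq α] (S : Finset α) (l : List α) : Finset α :=
  l.foldl (fun T a => symmDiff T {a}) S

/-- The number of colour changes while toggling the elements of a list, starting from `S`. -/
def listJumps {α : Type*} [DecidableEq α] (g : Finset α → Bool) : Finset α → List α → ℕ
  | _, [] => 0
  | S, a :: l => (if g (symmDiff S {a}) ≠ g S then 1 else 0) + listJumps g (symmDiff S {a}) l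

/-- Starting from `S`, the elements of `U` can be toggled, each exactly once, in some order with
at least `m` colour changes. -/
def Walk {α : Type*} [DecidableEq α] (g : Finset α → Bool) (S U : Finset α) (m : ℕ) : Prop :=
  ∃ l : List α, l.Nodup ∧ l.toFinset = U ∧ m ≤ listJumps g S l

section Walks

variable {α : Type*} [DecidableEq α] (g : Finset α → Bool)

lemma toggle_append (S : Finset α) (l l' : List α) :
    toggle S (l ++ l') = toggle (toggle S l) l' := by
  simp [toggle]

lemma toggle_eq (S : Finset α) (l : List α) (hl : l.Nodup) :
    toggle S l = symmDiff S l.toFinset := by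
  induction l generalizing S with
  | nil => ext; simp [toggle, mem_symmDiff]
  | cons a l ih =>
    rw [List.nodup_cons] at hl
    have h1 : toggle S (a :: l) = toggle (symmDiff S {a}) l := rfl
    have ha : a ∉ l.toFinset := by simpa using hl.1
    rw [h1, ih _ hl.2, List.toFinset_cons]
    ext x
    simp only [mem_symmDiff, mem_singleton, mem_insert]
    grind

lemma listJumps_append (S : Finset α) (l l' : List α) :
    listJumps g S (l ++ l') = listJumps g S l + listJumps g (toggle S l) l' := by
  induction l generalizing S with
  | nil => simp [listJumps, toggle]
  | cons a l ih =>
    have h1 : toggle S (a :: l) = toggle (symmDiff S {a}) l := rfl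
    simp only [List.cons_append, listJumps, ih, h1]
    omega

lemma listJumps_pos (S : Finset α) (l : List α) (h : g (toggle S l) ≠ g S) :
    1 ≤ listJumps g S l := by
  induction l generalizing S with
  | nil => exact absurd rfl h
  | cons a l ih =>
    by_cases hc : g (symmDiff S {a}) ≠ g S
    · simp only [listJumps, if_pos hc]; omega
    · have := ih (symmDiff S {a}) (by push Not at hc; rw [hc]; exact h)
      simp only [listJumps]; omega

lemma Walk.single {S U : Finset α} (h : g (symmDiff S U) ≠ g S) : Walk g S U 1 :=
  ⟨U.toList, U.nodup_toList, by simp, listJumps_pos g S _ (by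
    rw [toggle_eq _ _ U.nodup_toList]; simpa using h)⟩

variable {g}

lemma Walk.append {S U V : Finset α} {m k : ℕ} (h₁ : Walk g S U m)
    (h₂ : Walk g (symmDiff S U) V k) (hd : Disjoint U V) : Walk g S (U ∪ V) (m + k) := by
  obtain ⟨l, hl, rfl, hm⟩ := h₁
  obtain ⟨l', hl', rfl, hk⟩ := h₂
  refine ⟨l ++ l', ?_, by simp, ?_⟩
  · refine hl.append hl' ?_
    intro a ha hb
    exact Finset.disjoint_left.1 hd (by simpa using ha) (by simpa using hb)
  · rw [listJumps_append, toggle_eq S l hl]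
    omega

/-- A change of colour between `S` and `T`, followed by a walk from `T`. -/
lemma Walk.step {S T V : Finset α} {k : ℕ} (h : g T ≠ g S) (h₂ : Walk g T V k)
    (hd : Disjoint (symmDiff S T) V) : Walk g S (symmDiff S T ∪ V) (k + 1) := by
  have hT : symmDiff S (symmDiff S T) = T := symmDiff_symmDiff_cancel_left S T
  rw [add_comm]
  exact (Walk.single g (by rwa [hT])).append (by rwa [hT]) hd

/-- Between level `n - t`, coloured `1`, and level `t`, coloured `0`, one can go down and up `q`
times, toggling `q * d` elements of `R` and `q * d` elements of `A`, where `d = n - 2 t`. -/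
lemma Walk.zigzag {t d : ℕ} (h0 : ∀ S, S.card = t → g S = false)
    (h1 : ∀ S, S.card = t + d → g S = true) (q : ℕ) :
    ∀ S R A : Finset α, S.card = t + d → R ⊆ S → Disjoint A S → q * d ≤ R.card →
      q * d ≤ A.card → ∃ U, U ⊆ R ∪ A ∧ Walk g S U (2 * q) := by
  induction q with
  | zero => exact fun S R A _ _ _ _ _ => ⟨∅, by simp, [], by simp, by simp, by simp⟩
  | succ q ih =>
    intro S R A hS hR hA hRc hAc
    rw [Nat.succ_mul] at hRc hAc
    obtain ⟨R', hR', hRd⟩ := Finset.exists_subset_card_eq (show d ≤ R.card by omega)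
    obtain ⟨A', hA', hAd⟩ := Finset.exists_subset_card_eq (show d ≤ A.card by omega)
    have hR'S : R' ⊆ S := hR'.trans hR
    have hAS : ∀ a ∈ A, a ∉ S := fun _ h => Finset.disjoint_left.1 hA h
    have c1 : (S \ R').card = t := by rw [Finset.card_sdiff_of_subset hR'S]; omega
    have c2 : ((S \ R') ∪ A').card = t + d := by
      rw [Finset.card_union_of_disjoint, c1, hAd]
      exact Finset.disjoint_left.2 fun a ha ha' => hAS a (hA' ha') (mem_sdiff.1 ha).1
    obtain ⟨U, hU, hW⟩ := ih ((S \ R') ∪ A') (R \ R') (A \ A') c2 (by grind)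
      (Finset.disjoint_left.2 (by grind))
      (by rw [Finset.card_sdiff_of_subset hR']; omega)
      (by rw [Finset.card_sdiff_of_subset hA']; omega)
    have e1 : symmDiff S (S \ R') = R' := by
      ext a; simp only [mem_symmDiff, mem_sdiff]; grind
    have e2 : symmDiff (S \ R') ((S \ R') ∪ A') = A' := by
      ext a; simp only [mem_symmDiff, mem_sdiff, mem_union]; grind
    have hW2 := Walk.step (S := S \ R') (by rw [h0 _ c1, h1 _ c2]; simp) hW (by
      rw [e2]; exact Finset.disjoint_left.2 (by grind))
    rw [e2] at hW2
    have hW3 := Walk.step (S := S) (by rw [h0 _ c1, h1 _ hS]; simp) hW2 (by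
      rw [e1]; exact Finset.disjoint_left.2 (by grind))
    rw [e1] at hW3
    refine ⟨_, ?_, hW3⟩
    refine Finset.union_subset (hR'.trans subset_union_left)
      (Finset.union_subset (hA'.trans subset_union_right) (hU.trans ?_))
    exact Finset.union_subset_union sdiff_subset sdiff_subset

/-- From a set `S` of colour `0`, climb to level `n - t` and then zigzag. -/
lemma Walk.climb {t d : ℕ} (h0 : ∀ S, S.card = t → g S = false)
    (h1 : ∀ S, S.card = t + d → g S = true) (q : ℕ)
    (S R A : Finset α) (hg : g S = false) (hS : S.card ≤ t + d) (hR : R ⊆ S)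
    (hA : Disjoint A S) (hRc : q * d ≤ R.card) (hAc : t + d + q * d ≤ A.card + S.card) :
    ∃ U, U ⊆ R ∪ A ∧ Walk g S U (2 * q + 1) := by
  obtain ⟨A', hA', hAd⟩ := Finset.exists_subset_card_eq (show t + d - S.card ≤ A.card by omega)
  have hAS : ∀ a ∈ A, a ∉ S := fun _ h => Finset.disjoint_left.1 hA h
  have c : (S ∪ A').card = t + d := by
    rw [Finset.card_union_of_disjoint, hAd]
    · omega
    · exact Finset.disjoint_left.2 fun a ha ha' => hAS a (hA' ha') ha
  obtain ⟨U, hU, hW⟩ := Walk.zigzag h0 h1 q (S ∪ A') R (A \ A') c (by grind)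
    (Finset.disjoint_left.2 (by grind)) hRc
    (by rw [Finset.card_sdiff_of_subset hA']; omega)
  have e : symmDiff S (S ∪ A') = A' := by
    ext a; simp only [mem_symmDiff, mem_union]; grind
  have hW2 := Walk.step (S := S) (by rw [hg, h1 _ c]; simp) hW (by
    rw [e]; exact Finset.disjoint_left.2 (by grind))
  rw [e] at hW2
  exact ⟨_, Finset.union_subset (hA'.trans subset_union_right)
    (hU.trans (Finset.union_subset_union subset_rfl sdiff_subset)), hW2⟩

end Walks

/-! ### From walks to geodesics -/

/-- The point of the hypercube whose entries equal to `1` are those in `S`. -/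
def point {n : ℕ} (S : Finset (Fin n)) : Fin n → Bool := fun i => decide (i ∈ S)

lemma onesCount_point {n : ℕ} (S : Finset (Fin n)) : onesCount (point S) = S.card := by
  simp [onesCount, point]

lemma zerosCount_point {n : ℕ} (S : Finset (Fin n)) : zerosCount (point S) = n - S.card := by
  have : (univ.filter fun i => point S i = false) = Sᶜ := by ext; simp [point]
  rw [zerosCount, this, Finset.card_compl, Fintype.card_fin]

lemma jumps_le_inst {n : ℕ} (f : (Fin n → Bool) → Bool) (P : Fin (n+1) → Fin n → Bool)
    (hP : IsGeodesic P) : jumps f P ≤ inst f := by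
  refine le_csSup ⟨n, ?_⟩ ⟨P, hP, rfl⟩
  rintro m ⟨Q, -, rfl⟩
  exact (Finset.card_le_univ _).trans (by simp)

lemma listJumps_eq_sum {α : Type*} [DecidableEq α] (g : Finset α → Bool) (l : List α) :
    ∀ S, listJumps g S l = ∑ j ∈ range l.length,
      if g (toggle S (l.take (j + 1))) ≠ g (toggle S (l.take j)) then 1 else 0 := by
  induction l with
  | nil => simp [listJumps]
  | cons a l ih =>
    intro S
    rw [listJumps, List.length_cons, Finset.sum_range_succ', ih, add_comm]
    rfl

/-- A walk extends to a geodesic, which toggles the remaining entries afterwards. -/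
lemma Walk.le_inst {n : ℕ} (f : (Fin n → Bool) → Bool) {S U : Finset (Fin n)} {m : ℕ}
    (h : Walk (fun T => f (point T)) S U m) : m ≤ inst f := by
  obtain ⟨l₀, hl₀, -, hm⟩ := h
  obtain ⟨l, hl, hmem, hm⟩ : ∃ l : List (Fin n), l.Nodup ∧ (∀ i, i ∈ l) ∧
      m ≤ listJumps (fun T => f (point T)) S l := by
    refine ⟨l₀ ++ (l₀.toFinsetᶜ).toList, ?_, ?_, ?_⟩
    · refine hl₀.append (Finset.nodup_toList _) ?_
      intro a ha hb
      simp at hb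
      exact hb ha
    · intro i
      simp [em]
    · rw [listJumps_append]; omega
  have hlen : l.length = n := by
    have := List.toFinset_card_of_nodup hl
    rw [← this, Finset.eq_univ_of_forall (s := l.toFinset) (by simpa using hmem)]
    simp
  let σ : Fin n ≃ Fin n :=
    ((finCongr hlen.symm).trans (hl.getEquivOfForallMemList l hmem)).symm
  have hσ : ∀ j : Fin n, σ.symm j = l[j.1]'(by omega) := fun j => rfl
  let P : Fin (n+1) → Fin n → Bool := fun j => point (toggle S (l.take j))
  have hstep : ∀ j : Fin n, toggle S (l.take (j + 1)) =
      symmDiff (toggle S (l.take j)) {σ.symm j} := by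
    intro j
    rw [hσ, List.take_succ_eq_append_getElem (by omega), toggle_append]
    rfl
  have hP : IsGeodesic P := by
    refine ⟨σ, fun j i => ?_⟩
    simp only [P, Fin.val_succ, Fin.val_castSucc, hstep, point, mem_symmDiff, mem_singleton]
    have : σ i = j ↔ i = σ.symm j := by rw [Equiv.eq_symm_apply]
    by_cases h : i = σ.symm j <;> simp [this, h]
  refine hm.trans (le_trans (le_of_eq ?_) (jumps_le_inst f P hP))
  rw [listJumps_eq_sum, hlen, jumps, Finset.card_filter, ← Fin.sum_univ_eq_sum_range]
  rfl

/-! ### The lower bound -/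

/-- The zig-zag bound (b): for `t ≥ 1` and `n ≥ 2t+1`, every colouring `f` of `H_n`
respecting `B_t(0^n)` and `B_t(1^n)` satisfies
`inst f ≥ ⌊(t-1)/(n-2t)⌋ + ⌈(t-1)/(n-2t)⌉ + 3`. -/
theorem zigzag_inst (n t : ℕ) (ht : 1 ≤ t) (hvalid : 2 * t + 1 ≤ n)
    (f : (Fin n → Bool) → Bool) (hf : Respects t f) :
    (t - 1) / (n - 2 * t) + ((t - 1) + (n - 2 * t) - 1) / (n - 2 * t) + 3 ≤ inst f := by
  obtain ⟨d, rfl⟩ : ∃ d, n = 2 * t + d := ⟨n - 2 * t, by omega⟩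
  have hd : 0 < d := by omega
  rw [show 2 * t + d - 2 * t = d by omega]
  set g : Finset (Fin (2 * t + d)) → Bool := fun T => f (point T) with hg
  have h0 : ∀ S, S.card ≤ t → g S = false := fun S hS => hf.1 _ (by rwa [onesCount_point])
  have h1 : ∀ S, t + d ≤ S.card → g S = true := fun S hS =>
    hf.2 _ (by rw [zerosCount_point]; omega)
  have hlo : ∀ S, g S = true → t + 1 ≤ S.card := fun S hS => by
    by_contra h
    rw [h0 S (by omega)] at hS
    exact absurd hS (by simp)
  have hhi : ∀ S, g S = false → S.card ≤ t + d := fun S hS => by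
    by_contra h
    rw [h1 S (by omega)] at hS
    exact absurd hS (by simp)
  have hcu : (univ : Finset (Fin (2 * t + d))).card = 2 * t + d := by simp
  have hqd : (t - 1) / d * d ≤ t - 1 := Nat.div_mul_le_self _ _
  have hdm := Nat.div_add_mod (t - 1) d
  rw [mul_comm] at hdm
  set q := (t - 1) / d with hq
  by_cases hr : (t - 1) % d = 0
  · -- `d` divides `t - 1`.
    have hceil : (t - 1 + d - 1) / d = q := by
      rw [Nat.div_eq_iff hd]; constructor <;> omega
    rw [hceil]
    obtain ⟨A, hA, hmin⟩ := Finset.exists_min_image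
      (univ.filter fun S => g S = true) Finset.card ⟨univ, by simp [h1 univ (by omega)]⟩
    simp only [mem_filter, mem_univ, true_and] at hA hmin
    have hAc := hlo A hA
    have herase : ∀ a ∈ A, g (A.erase a) = false := fun a ha => by
      by_contra h
      have := hmin (A.erase a) (by simpa using h)
      rw [Finset.card_erase_of_mem ha] at this
      omega
    obtain ⟨a, ha, b, hb, hab⟩ := Finset.one_lt_card.1 (show 1 < A.card by omega)
    obtain ⟨U, hU, hW⟩ := Walk.climb (g := g) (fun S hS => h0 S hS.le)
      (fun S hS => h1 S hS.ge) q (A.erase b) ((A.erase b).erase a) Aᶜ (herase b hb)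
      (hhi _ (herase b hb)) (erase_subset _ _) (Finset.disjoint_left.2 (by simp +contextual))
      (by
        rw [Finset.card_erase_of_mem (mem_erase.2 ⟨hab, ha⟩), Finset.card_erase_of_mem hb]
        omega)
      (by
        have := Finset.card_le_univ A
        rw [Fintype.card_fin] at this
        rw [Finset.card_compl, Finset.card_erase_of_mem hb, Fintype.card_fin]
        omega)
    have hUa : a ∉ U := fun h => by have := hU h; simp [ha] at this
    have hUb : b ∉ U := fun h => by have := hU h; simp [hb] at this
    have e1 : symmDiff A (A.erase b) = {b} := by
      ext i; simp only [mem_symmDiff, mem_erase, mem_singleton]; grind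
    have e2 : symmDiff (A.erase a) A = {a} := by
      ext i; simp only [mem_symmDiff, mem_erase, mem_singleton]; grind
    have hW1 := Walk.step (S := A) (by rw [hA, herase b hb]; simp) hW (by
      rw [e1, Finset.disjoint_singleton_left]; exact hUb)
    rw [e1] at hW1
    have hW2 := Walk.step (S := A.erase a) (by rw [hA, herase a ha]; simp) hW1 (by
      rw [e2, Finset.disjoint_singleton_left]; simp [hab, hUa])
    have := hW2.le_inst
    omega
  · -- `d` does not divide `t - 1`, so that `q * d ≤ t - 2`.
    have hceil : (t - 1 + d - 1) / d = q + 1 := by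
      have := Nat.mod_lt (t - 1) hd
      rw [Nat.div_eq_iff hd, Nat.succ_mul]; constructor <;> omega
    rw [hceil]
    obtain ⟨Z, Y, x, b, hZY, hxY, hbY, hxb, hZb, hZbx, hY, hYb⟩ :=
      repeatedRise_of_interval g _ ∅ univ rfl (by simp) (h0 _ (by simp)) (h1 _ (by omega))
        (fun v _ => h0 _ (by simpa using ht))
        (fun v _ => h1 _ (by rw [Finset.card_erase_of_mem (mem_univ _)]; omega))
    have hxZ : x ∉ Z := fun h => hxY (hZY h)
    have hbZ : b ∉ Z := fun h => hbY (hZY h)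
    have hcZ := hlo _ hZbx
    rw [Finset.card_insert_of_notMem (by simp [hxb, hxZ]), Finset.card_insert_of_notMem hbZ] at hcZ
    have hcY : (insert x (insert b Y)).card = Y.card + 2 := by
      rw [Finset.card_insert_of_notMem (by simp [hxb, hxY]), Finset.card_insert_of_notMem hbY]
    obtain ⟨U, hU, hW⟩ := Walk.climb (g := g) (fun S hS => h0 S hS.le)
      (fun S hS => h1 S hS.ge) q Y Z (insert x (insert b Y))ᶜ hY (hhi Y hY) hZY
      (Finset.disjoint_left.2 (by simp +contextual)) (by omega)
      (by
        have := Finset.card_le_univ (insert x (insert b Y))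
        rw [Fintype.card_fin] at this
        rw [Finset.card_compl, hcY, Fintype.card_fin]
        omega)
    have hUx : x ∉ U := fun h => by have := hU h; simp [hxZ] at this
    have hUb : b ∉ U := fun h => by have := hU h; simp [hbZ] at this
    have hUY : ∀ i ∈ U, i ∈ Y → i ∈ Z := fun i h hi => by
      have := hU h
      simpa [hi] using this
    have e1 : symmDiff (insert b Y) Y = {b} := by
      ext i; simp only [mem_symmDiff, mem_insert, mem_singleton]; grind
    have e2 : symmDiff (insert b Z) (insert b Y) = Y \ Z := by
      ext i; simp only [mem_symmDiff, mem_insert, mem_sdiff]; grind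
    have e3 : symmDiff (insert x (insert b Z)) (insert b Z) = {x} := by
      ext i; simp only [mem_symmDiff, mem_insert, mem_singleton]; grind
    have hW1 := Walk.step (S := insert b Y) (by rw [hY, hYb]; simp) hW (by
      rw [e1, Finset.disjoint_singleton_left]; exact hUb)
    rw [e1] at hW1
    have hW2 := Walk.step (S := insert b Z) (by rw [hZb, hYb]; simp) hW1 (by
      rw [e2]; exact Finset.disjoint_left.2 (by grind))
    rw [e2] at hW2
    have hW3 := Walk.step (S := insert x (insert b Z)) (by rw [hZb, hZbx]; simp) hW2 (by
      rw [e3, Finset.disjoint_singleton_left]; simp [hxb, hxY, hUx])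
    have := hW3.le_inst
    omega
end

section
/- Let n, y_0, t_0, t be natural numbers with t >= t_0, n >= 2t+1, and such that n - 2t divides t - t_0, and set n_0 = n - 2(t - t_0) (so that n_0 - 2t_0 = n - 2t). If every colouring f_0 of H_{n_0} with t_{f_0} = t_0 satisfies winst(f_0) >= y_0, then every colouring f of H_n with t_f = t satisfies winst(f) >= y_0 + 2(t - t_0)/(n - 2t). -/
/-!
The heart of the matter is one step: if `n₀ = 2 t₀ + s` with `s ≥ 1`, and every colouring `f₀` of
`H_{n₀}` with `t_{f₀} = t₀` has `winst f₀ ≥ y`, then every colouring `F` of `H_{n₀ + 2s}` with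
`t_F = t₀ + s` has `winst F ≥ y + 2` (`winst_step`). Iterating it `(t - t₀) / (n - 2t)` times, with
`s = n - 2t`, gives the theorem.

For the step, split the coordinates into `n₀` old ones and `2s` new ones. A point `y` of `H_{n₀}` is
extended by a balanced word `v b` (`word s b` below) on the new coordinates: `b` on one half of them and `!b` on the
other, with `b` tied to a single old coordinate `c` (`b = y c` or `b = !y c`). So
`f₀ y = F (y, v (y c ^^ d))`. Every word `v b` has exactly `s` ones, hence `f₀` respects the balls of
radius `t₀`, and the splitting can be chosen so that a witness of `t_F = t₀ + s` restricts to a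
witness of `t_{f₀} = t₀`. The extension commutes with complementation, so a well-ending
`(t₀+1)`-geodesic of `f₀` lifts to a well-ending `(t₀+s+1)`-geodesic of `F` once it is decided when
the `2s` new coordinates are flipped. They are flipped in one block, somewhere before `c`.

The block is inserted at the last point before the flip of `c` whose weight lies in
`[t₀, t₀ + s]` (`exists_split`): from there up to the flip of `c` the colour under `f₀` is constant,
because the weight stays on one side of the strip. At that point the extended weight lies in
`[t₀ + s, t₀ + 2s]`, and the `s` upward and `s` downward flips of the block can be ordered so as to
reach first the opposite colour and then the original one again (`exists_block`): going down to
weight `t₀ + s` forces colour `0`, and `s` upward flips from there lead to weight `t₀ + 2s`, hence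
colour `1`; symmetrically in the other direction. This gains two jumps.

Geodesics are handled as a starting point together with the list of coordinates to flip.
-/

open Finset

namespace Strips

/-! ### Walks given by lists of coordinates -/

section Weight

variable {ι : Type*} [Fintype ι]

/-- The number of entries equal to `1`, over an arbitrary finite index type. -/
def wt (x : ι → Bool) : ℕ := (univ.filter fun i => x i = true).card

lemma wt_eq_sum (x : ι → Bool) : wt x = ∑ i, (x i).toNat := by
  unfold wt
  rw [card_filter]
  exact sum_congr rfl fun i _ => by cases x i <;> rfl

lemma wt_compl (x : ι → Bool) : wt (fun i => !x i) + wt x = Fintype.card ι := by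
  rw [wt_eq_sum, wt_eq_sum, ← sum_add_distrib]
  rw [sum_congr rfl (g := fun _ => 1) fun i _ => by cases x i <;> rfl]
  simp

end Weight

section Walk

variable {ι : Type*} [DecidableEq ι]

/-- The point obtained from `x` by changing the entry `i`. -/
def flip (x : ι → Bool) (i : ι) : ι → Bool := Function.update x i (!x i)

/-- The point reached from `x` by changing, in order, the entries in the list `L`. -/
def flips (x : ι → Bool) (L : List ι) : ι → Bool := L.foldl flip x

/-- The number of colour changes met while changing, in order, the entries in the list. -/
def walkJumps (f : (ι → Bool) → Bool) : (ι → Bool) → List ι → ℕ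
  | _, [] => 0
  | x, i :: L => (if f (flip x i) ≠ f x then 1 else 0) + walkJumps f (flip x i) L

@[simp] lemma flips_nil (x : ι → Bool) : flips x [] = x := rfl

@[simp] lemma flips_cons (x : ι → Bool) (i : ι) (L : List ι) :
    flips x (i :: L) = flips (flip x i) L := rfl

lemma flips_append (x : ι → Bool) (L M : List ι) :
    flips x (L ++ M) = flips (flips x L) M := by
  simp [flips, List.foldl_append]

lemma walkJumps_append (f : (ι → Bool) → Bool) (x : ι → Bool) (L M : List ι) :
    walkJumps f x (L ++ M) = walkJumps f x L + walkJumps f (flips x L) M := by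
  induction L generalizing x with
  | nil => simp [walkJumps]
  | cons i L ih => simp [walkJumps, ih, add_assoc]

lemma le_walkJumps (f : (ι → Bool) → Bool) (x : ι → Bool) (L : List ι) :
    (if f (flips x L) ≠ f x then 1 else 0) ≤ walkJumps f x L := by
  induction L generalizing x with
  | nil => simp
  | cons i L ih =>
    have := ih (flip x i)
    simp only [flips_cons, walkJumps]
    by_cases h : f (flip x i) = f x
    · rw [h] at this; rwa [if_neg (not_not.2 h), zero_add]
    · rw [if_pos h]
      have h1 : ∀ (p : Prop) [Decidable p], (if p then 1 else 0) ≤ 1 := by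
        intro p _; by_cases hp : p <;> simp [hp]
      exact (h1 _).trans (by omega)

lemma flips_apply (x : ι → Bool) (L : List ι) (hL : L.Nodup) (i : ι) :
    flips x L i = if i ∈ L then !x i else x i := by
  induction L generalizing x with
  | nil => simp
  | cons j L ih =>
    rw [List.nodup_cons] at hL
    rw [flips_cons, ih _ hL.2]
    by_cases h : i = j
    · subst h; simp [hL.1, flip]
    · simp [h, flip]

lemma flips_all (x : ι → Bool) (L : List ι) (hL : L.Nodup) (h : ∀ i, i ∈ L) :
    flips x L = fun i => !x i := by
  funext i; simp [flips_apply x L hL, h]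

variable [Fintype ι]

lemma wt_flip (x : ι → Bool) (i : ι) :
    wt (flip x i) + (x i).toNat = wt x + (!x i).toNat := by
  rw [wt_eq_sum, wt_eq_sum, ← add_sum_erase _ _ (mem_univ i), ← add_sum_erase _ _ (mem_univ i)]
  have : ∑ j ∈ univ.erase i, (flip x i j).toNat = ∑ j ∈ univ.erase i, (x j).toNat :=
    sum_congr rfl fun j hj => by simp [flip, ne_of_mem_erase hj]
  rw [this]
  simp [flip]
  omega

lemma wt_flips_up (x : ι → Bool) (L : List ι) (hL : L.Nodup) (h : ∀ i ∈ L, x i = false) :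
    wt (flips x L) = wt x + L.length := by
  induction L generalizing x with
  | nil => simp
  | cons i L ih =>
    rw [List.nodup_cons] at hL
    have h1 := wt_flip x i
    rw [h i (by simp)] at h1
    rw [flips_cons, ih _ hL.2]
    · simp at h1 ⊢; omega
    · intro j hj
      have : j ≠ i := by rintro rfl; exact hL.1 hj
      simp [flip, this, h j (by simp [hj])]

lemma wt_flips_down (x : ι → Bool) (L : List ι) (hL : L.Nodup) (h : ∀ i ∈ L, x i = true) :
    wt (flips x L) + L.length = wt x := by
  induction L generalizing x with
  | nil => simp
  | cons i L ih =>
    rw [List.nodup_cons] at hL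
    have h1 := wt_flip x i
    rw [h i (by simp)] at h1
    have h2 := ih (flip x i) hL.2 (by
      intro j hj
      have : j ≠ i := by rintro rfl; exact hL.1 hj
      simp [flip, this, h j (by simp [hj])])
    rw [flips_cons]
    simp at h1 ⊢; omega

/-- Any walk starting in the strip `[a, b]` can be cut at its last visit to the strip; afterwards
the weight stays on one side, so a colouring that is constant on either side has no jumps there. -/
lemma exists_split (f : (ι → Bool) → Bool) (a b : ℕ) (h0 : ∀ x, wt x ≤ a → f x = false)
    (h1 : ∀ x, b ≤ wt x → f x = true) (y : ι → Bool) (ha : a ≤ wt y) (hb : wt y ≤ b)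
    (M : List ι) : ∃ Q R, M = Q ++ R ∧ a ≤ wt (flips y Q) ∧ wt (flips y Q) ≤ b ∧
      walkJumps f (flips y Q) R = 0 := by
  induction M using List.reverseRecOn with
  | nil => exact ⟨[], [], by simp, by simpa, by simpa, rfl⟩
  | append_singleton M i ih =>
    obtain ⟨Q, R, rfl, hQa, hQb, hR⟩ := ih
    have hw := wt_flip (flips y (Q ++ R)) i
    have hT := Bool.toNat_le (flips y (Q ++ R) i)
    have hT' := Bool.toNat_le (!flips y (Q ++ R) i)
    have he : flips y (Q ++ R ++ [i]) = flip (flips y (Q ++ R)) i := by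
      rw [flips_append]; rfl
    rcases lt_or_ge (wt (flip (flips y (Q ++ R)) i)) a with hlt | hge
    · refine ⟨Q, R ++ [i], by simp, hQa, hQb, ?_⟩
      rw [walkJumps_append, hR, ← flips_append]
      simp [walkJumps, h0 _ hlt.le, h0 (flips y (Q ++ R)) (by omega)]
    rcases lt_or_ge b (wt (flip (flips y (Q ++ R)) i)) with hlt | hge'
    · refine ⟨Q, R ++ [i], by simp, hQa, hQb, ?_⟩
      rw [walkJumps_append, hR, ← flips_append]
      simp [walkJumps, h1 _ hlt.le, h1 (flips y (Q ++ R)) (by omega)]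
    exact ⟨Q ++ R ++ [i], [], by simp, by rwa [he], by rwa [he], rfl⟩

/-- If the colour is `0` up to weight `a` and `1` from weight `a + s` on, then from a point of weight
in `[a, a + s]`, flipping `s` entries up and `s` entries down can be
arranged so that the colour changes and then changes back. -/
lemma exists_block (F : (ι → Bool) → Bool) (a s : ℕ) (h0 : ∀ x, wt x ≤ a → F x = false)
    (h1 : ∀ x, a + s ≤ wt x → F x = true) (z : ι → Bool) (ha : a ≤ wt z) (hb : wt z ≤ a + s)
    (U W : List ι) (hU : U.length = s) (hW : W.length = s) (hnd : (U ++ W).Nodup)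
    (zU : ∀ i ∈ U, z i = false) (zW : ∀ i ∈ W, z i = true) :
    ∃ D1 D2 D3, (D1 ++ D2 ++ D3).Perm (U ++ W) ∧ F (flips z D1) = !F z ∧
      F (flips z (D1 ++ D2)) = F z := by
  obtain ⟨nU, nW, hdis⟩ := List.nodup_append'.1 hnd
  cases hz : F z with
  | true =>
    have nT : (W.take (wt z - a)).Nodup := nW.sublist (List.take_sublist _ _)
    have e := wt_flips_down z (W.take (wt z - a)) nT fun i hi => zW i (List.mem_of_mem_take hi)
    rw [List.length_take, hW] at e
    have e2 := wt_flips_up (flips z (W.take (wt z - a))) U nU fun i hi => by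
      rw [flips_apply _ _ nT, if_neg fun h => hdis hi (List.mem_of_mem_take h), zU i hi]
    refine ⟨W.take (wt z - a), U, W.drop (wt z - a), ?_, ?_, ?_⟩
    · refine (List.perm_append_comm.append_right _).trans ?_
      rw [List.append_assoc, List.take_append_drop]
    · exact h0 _ (by omega)
    · rw [flips_append]; exact h1 _ (by omega)
  | false =>
    have nT : (U.take (a + s - wt z)).Nodup := nU.sublist (List.take_sublist _ _)
    have e := wt_flips_up z (U.take (a + s - wt z)) nT fun i hi => zU i (List.mem_of_mem_take hi)
    rw [List.length_take, hU] at e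
    have e2 := wt_flips_down (flips z (U.take (a + s - wt z))) W nW fun i hi => by
      rw [flips_apply _ _ nT, if_neg fun h => hdis (List.mem_of_mem_take h) hi, zW i hi]
    refine ⟨U.take (a + s - wt z), W, U.drop (a + s - wt z), ?_, ?_, ?_⟩
    · rw [List.append_assoc]
      refine (List.perm_append_comm.append_left _).trans ?_
      rw [← List.append_assoc, List.take_append_drop]
    · exact h1 _ (by omega)
    · rw [flips_append]; exact h0 _ (by omega)

end Walk

/-! ### The extended cube -/

section Extend

variable {ι : Type*} {s : ℕ}

/-- The balanced word on the new coordinates: `b` on the first half and `!b` on the second. -/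
def word (s : ℕ) (b : Bool) : Fin s ⊕ Fin s → Bool := Sum.elim (fun _ => b) (fun _ => !b)

lemma wt_elim [Fintype ι] (y : ι → Bool) (b : Bool) : wt (Sum.elim y (word s b)) = wt y + s := by
  rw [wt_eq_sum, wt_eq_sum, Fintype.sum_sum_type, Fintype.sum_sum_type]
  cases b <;> simp [word]

/-- The colouring of the small cube induced by `F`, the word on the new coordinates being tied to
the entry `c`; the bit `d` decides which of the two words goes with which value of that entry. -/
def restrict (F : (ι ⊕ (Fin s ⊕ Fin s) → Bool) → Bool) (c : ι) (d : Bool) (y : ι → Bool) : Bool :=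
  F (Sum.elim y (word s (y c ^^ d)))

variable [DecidableEq ι]

lemma flip_inl (y : ι → Bool) (w : Fin s ⊕ Fin s → Bool) (i : ι) :
    flip (Sum.elim y w) (Sum.inl i) = Sum.elim (flip y i) w := by
  funext j
  rcases j with j | j
  · by_cases h : j = i
    · subst h; simp [flip]
    · simp [flip, h]
  · simp [flip]

lemma flips_inl (y : ι → Bool) (w : Fin s ⊕ Fin s → Bool) (L : List ι) :
    flips (Sum.elim y w) (L.map Sum.inl) = Sum.elim (flips y L) w := by
  induction L generalizing y with
  | nil => simp
  | cons i L ih => simp [flip_inl, ih]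

lemma flips_apply_of_notMem (y : ι → Bool) (L : List ι) (c : ι) (hc : c ∉ L) :
    flips y L c = y c := by
  induction L generalizing y with
  | nil => simp
  | cons i L ih =>
    simp only [List.mem_cons, not_or] at hc
    rw [flips_cons, ih _ hc.2]
    simp [flip, hc.1]

lemma walkJumps_restrict (F : (ι ⊕ (Fin s ⊕ Fin s) → Bool) → Bool) (c : ι) (d : Bool)
    (y : ι → Bool) (b : Bool) (hb : (y c ^^ d) = b) (L : List ι) (hc : c ∉ L) :
    walkJumps F (Sum.elim y (word s b)) (L.map Sum.inl) = walkJumps (restrict F c d) y L := by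
  induction L generalizing y with
  | nil => rfl
  | cons i L ih =>
    simp only [List.mem_cons, not_or] at hc
    have h : flip y i c = y c := by simp [flip, hc.1]
    simp only [List.map_cons, walkJumps, flip_inl]
    rw [ih (flip y i) (by rw [h, hb]) hc.2]
    simp [restrict, h, hb]

/-- A full walk of the small cube lifts to a full walk of the extended cube with two more
jumps. -/
lemma exists_lift [Fintype ι] (F : (ι ⊕ (Fin s ⊕ Fin s) → Bool) → Bool) (c : ι) (d : Bool)
    (t0 : ℕ) (h0 : ∀ x, wt x ≤ t0 + s → F x = false) (h1 : ∀ x, t0 + s + s ≤ wt x → F x = true)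
    (y : ι → Bool) (ha : t0 ≤ wt y) (hb : wt y ≤ t0 + s) (L : List ι) (hL : L.Nodup)
    (hall : ∀ i, i ∈ L) :
    ∃ L' : List (ι ⊕ (Fin s ⊕ Fin s)), L'.Nodup ∧ (∀ i, i ∈ L') ∧
      walkJumps (restrict F c d) y L + 2 ≤
        walkJumps F (Sum.elim y (word s (y c ^^ d))) L' := by
  obtain ⟨M1, M2, rfl⟩ := List.append_of_mem (hall c)
  obtain ⟨Q, R, rfl, hQa, hQb, hR⟩ := exists_split (restrict F c d) t0 (t0 + s)
    (fun x hx => h0 _ (by rw [wt_elim]; omega)) (fun x hx => h1 _ (by rw [wt_elim]; omega))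
    y ha hb M1
  have hcs : c ∉ Q ∧ c ∉ R ∧ c ∉ M2 := by
    have := (List.nodup_middle.1 hL)
    simp only [List.nodup_cons, List.mem_append, not_or] at this
    exact ⟨this.1.1.1, this.1.1.2, this.1.2⟩
  obtain ⟨hcQ, hcR, hcM⟩ := hcs
  set b := (y c ^^ d) with hbdef
  set yj := flips y Q with hyj
  have hyjc : yj c = y c := flips_apply_of_notMem y Q c hcQ
  -- `A b` lists the new coordinates where `word s b` is `1`; those of `A (!b)` have to go up.
  let A : Bool → List (ι ⊕ (Fin s ⊕ Fin s)) := fun b =>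
    if b then (List.finRange s).map (fun i => Sum.inr (Sum.inl i))
    else (List.finRange s).map (fun i => Sum.inr (Sum.inr i))
  have hlen : ∀ b, (A b).length = s := by intro b; cases b <;> simp [A]
  have hAnd : (A (!b) ++ A b).Nodup := by
    rw [List.nodup_append']
    have key : ∀ b, (A b).Nodup := by
      intro b
      cases b <;> simp only [A] <;>
        exact (List.nodup_finRange s).map fun i j h => by simpa using h
    refine ⟨key _, key _, ?_⟩
    intro i hi hj
    cases b <;> simp [A] at hi hj <;> grind
  have hA0 : ∀ i ∈ A (!b), Sum.elim yj (word s b) i = false := by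
    cases b <;> simp [A, word]
  have hA1 : ∀ i ∈ A b, Sum.elim yj (word s b) i = true := by
    cases b <;> simp [A, word]
  have hAall : ∀ j, Sum.inr j ∈ A (!b) ++ A b := by
    intro j
    rcases j with j | j <;> cases b <;> simp [A]
  have hAno : ∀ j, Sum.inl j ∉ A (!b) ++ A b := by
    intro j
    cases b <;> simp [A]
  obtain ⟨D1, D2, D3, hp, e1, e2⟩ := exists_block F (t0 + s) s h0 h1
    (Sum.elim yj (word s b)) (by rw [wt_elim]; omega) (by rw [wt_elim]; omega)
    (A (!b)) (A b) (hlen _) (hlen _) hAnd hA0 hA1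
  have hDnd : (D1 ++ D2 ++ D3).Nodup := hp.nodup_iff.2 hAnd
  have hDflips : flips (Sum.elim yj (word s b)) (D1 ++ D2 ++ D3)
      = Sum.elim yj (word s (!b)) := by
    funext j
    rw [flips_apply _ _ hDnd]
    rcases j with j | j
    · rw [if_neg (mt hp.mem_iff.1 (hAno j))]; rfl
    · rw [if_pos (hp.mem_iff.2 (hAall j))]; rcases j with j | j <;> simp [word]
  -- The end of the walk through the flip of `c`, in the small and in the extended cube.
  set yk := flip (flips yj R) c with hyk
  have hykc : (yk c ^^ d) = !b := by
    rw [hyk, hbdef, ← hyjc, ← flips_apply_of_notMem yj R c hcR]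
    simp [flip]
  have hfin : flips (flips (Sum.elim yj (word s b)) (D1 ++ D2))
      (D3 ++ (R ++ [c]).map Sum.inl) = Sum.elim yk (word s (!b)) := by
    rw [← flips_append, ← List.append_assoc, flips_append, hDflips, flips_inl, flips_append]
    rfl
  refine ⟨Q.map Sum.inl ++ (D1 ++ (D2 ++ ((D3 ++ (R ++ [c]).map Sum.inl) ++ M2.map Sum.inl))),
    ?_, ?_, ?_⟩
  · have hperm : (Q.map Sum.inl ++ (D1 ++ (D2 ++ ((D3 ++ (R ++ [c]).map Sum.inl) ++
        M2.map Sum.inl)))).Perm ((Q ++ R ++ c :: M2).map Sum.inl ++ (D1 ++ D2 ++ D3)) := by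
      simp only [List.map_append, List.map_cons, List.append_assoc, List.map_nil]
      refine List.Perm.append_left _ ?_
      have := (List.perm_append_comm (l₁ := D1 ++ D2 ++ D3)
        (l₂ := (R.map Sum.inl ++ ([Sum.inl c] ++ M2.map Sum.inl))))
      simpa only [List.append_assoc, List.cons_append, List.nil_append] using this
    rw [hperm.nodup_iff, List.nodup_append']
    refine ⟨hL.map Sum.inl_injective, hDnd, ?_⟩
    intro i hi hj
    obtain ⟨k, -, rfl⟩ := List.mem_map.1 hi
    exact hAno k (hp.mem_iff.1 hj)
  · intro i
    rcases i with i | i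
    · have := hall i
      simp only [List.mem_append, List.mem_cons, List.mem_map] at this ⊢
      grind
    · have := hp.mem_iff.2 (hAall i)
      simp only [List.mem_append] at this ⊢
      tauto
  · have g1 := le_walkJumps F (Sum.elim yj (word s b)) D1
    have g2 := le_walkJumps F (flips (Sum.elim yj (word s b)) D1) D2
    have g3 := le_walkJumps F (flips (Sum.elim yj (word s b)) (D1 ++ D2))
      (D3 ++ (R ++ [c]).map Sum.inl)
    rw [← flips_append, e1, e2] at g2
    rw [e1] at g1
    rw [hfin, e2] at g3
    have g4 : (restrict F c d (flips yj R)) = restrict F c d yj := by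
      have := le_walkJumps (restrict F c d) yj R
      rw [hR] at this
      by_contra hne
      simp [hne] at this
    have g5 : restrict F c d yj = F (Sum.elim yj (word s b)) := by
      rw [restrict, hyjc]
    have g6 : restrict F c d yk = F (Sum.elim yk (word s (!b))) := by
      rw [restrict, hykc]
    have hM := walkJumps_restrict F c d yk (!b) hykc M2 hcM
    have hQ := walkJumps_restrict F c d y b hbdef.symm Q hcQ
    rw [List.append_assoc, walkJumps_append, walkJumps_append, ← hyj, hR, walkJumps, ← hyk, g4, g5,
      g6]
    rw [walkJumps_append, walkJumps_append, walkJumps_append, walkJumps_append, flips_inl, ← hyj,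
      ← flips_append _ D1 D2, hfin, hM, hQ]
    simp only [ne_eq, Bool.not_eq_not, Bool.not_eq_eq_eq_not] at g1 g2
    simp at g1 g2
    simp only [ne_eq] at g3 ⊢
    omega

end Extend

/-! ### Geodesics as lists -/

lemma walk_ofFn {ι : Type*} [DecidableEq ι] (f : (ι → Bool) → Bool) (m : ℕ)
    (P : Fin (m + 1) → ι → Bool) (g : Fin m → ι)
    (h : ∀ j : Fin m, P j.succ = flip (P j.castSucc) (g j)) :
    walkJumps f (P 0) (List.ofFn g) = (univ.filter fun j : Fin m =>
      f (P j.succ) ≠ f (P j.castSucc)).card ∧ flips (P 0) (List.ofFn g) = P (Fin.last m) := by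
  rw [card_filter]
  induction m with
  | zero => simp [walkJumps]
  | succ m ih =>
    have h0 := h 0
    obtain ⟨i1, i2⟩ := ih (fun j => P j.succ) (fun j => g j.succ) (fun j => h j.succ)
    rw [List.ofFn_succ, Fin.sum_univ_succ]
    simp only [walkJumps, flips_cons]
    rw [Fin.castSucc_zero] at h0 ⊢
    rw [← h0]
    exact ⟨congrArg _ i1, i2⟩

lemma geodesic_to_list {n : ℕ} (f : (Fin n → Bool) → Bool) (P : Fin (n + 1) → Fin n → Bool)
    (hP : IsGeodesic P) : ∃ L : List (Fin n), L.Nodup ∧ (∀ i, i ∈ L) ∧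
      walkJumps f (P 0) L = jumps f P ∧ P (Fin.last n) = fun i => !P 0 i := by
  obtain ⟨σ, hσ⟩ := hP
  have hs : ∀ j : Fin n, P j.succ = flip (P j.castSucc) (σ.symm j) := by
    intro j
    funext l
    rw [hσ]
    by_cases h : σ l = j
    · subst h; simp [flip]
    · have : l ≠ σ.symm j := by rintro rfl; simp at h
      simp [flip, h, this]
  obtain ⟨h1, h2⟩ := walk_ofFn f n P σ.symm hs
  have hnd : (List.ofFn σ.symm).Nodup := List.nodup_ofFn.2 σ.symm.injective
  have hall : ∀ i, i ∈ List.ofFn σ.symm := fun i => by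
    rw [List.mem_ofFn]; exact σ.symm.surjective i
  exact ⟨_, hnd, hall, h1, by rw [← h2, flips_all _ _ hnd hall]⟩

lemma list_to_geodesic {n : ℕ} (f : (Fin n → Bool) → Bool) (x : Fin n → Bool) (L : List (Fin n))
    (hL : L.Nodup) (hall : ∀ i, i ∈ L) : ∃ P : Fin (n + 1) → Fin n → Bool,
      IsGeodesic P ∧ P 0 = x ∧ jumps f P = walkJumps f x L ∧ P (Fin.last n) = fun i => !x i := by
  have hlen : L.length = n := by
    have := List.toFinset_card_of_nodup hL
    rw [← this, (eq_univ_iff_forall.2 fun i => List.mem_toFinset.2 (hall i))]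
    simp
  let g : Fin n → Fin n := fun j => L[(j : ℕ)]'(by rw [hlen]; exact j.2)
  have hg : List.ofFn g = L := by
    apply List.ext_getElem
    · simp [hlen]
    · intro i h1 h2; simp [g]
  have hinj : Function.Injective g := List.nodup_ofFn.1 (hg ▸ hL)
  let P : Fin (n + 1) → Fin n → Bool := fun j => flips x (L.take j)
  have hP0 : P 0 = x := by simp [P]
  have hs : ∀ j : Fin n, P j.succ = flip (P j.castSucc) (g j) := by
    intro j
    have : L.take (j + 1) = L.take j ++ [g j] := by
      rw [List.take_succ_eq_append_getElem (by rw [hlen]; exact j.2)]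
    simp only [P, Fin.val_succ, Fin.val_castSucc, this, flips_append]
    rfl
  obtain ⟨h1, h2⟩ := walk_ofFn f n P g hs
  rw [hg, hP0] at h1 h2
  refine ⟨P, ⟨(Equiv.ofBijective g (Finite.injective_iff_bijective.1 hinj)).symm, ?_⟩, hP0,
    h1.symm, by rw [← h2, flips_all x L hL hall]⟩
  intro j l
  simp only [hs, Equiv.symm_apply_eq, Equiv.ofBijective_apply]
  by_cases h : l = g j
  · subst h; simp [flip]
  · simp [flip, h]

lemma zerosCount_eq {n : ℕ} (x : Fin n → Bool) : zerosCount x = wt (fun i => !x i) := by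
  simp [zerosCount, wt]

lemma onesCount_eq {n : ℕ} (x : Fin n → Bool) : onesCount x = wt x := rfl

lemma zerosCount_add {n : ℕ} (x : Fin n → Bool) : zerosCount x + wt x = n := by
  rw [zerosCount_eq, wt_compl, Fintype.card_fin]

lemma bddAbove_winst {n : ℕ} (t : ℕ) (f : (Fin n → Bool) → Bool) :
    BddAbove {m | ∃ P : Fin (n+1) → Fin n → Bool, IsGeodesic P ∧ onesCount (P 0) = t + 1 ∧
      (f (P 0) = true ∨ f (P (Fin.last n)) = false) ∧ m = jumps f P} := by
  refine ⟨n, ?_⟩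
  rintro m ⟨P, -, -, -, rfl⟩
  exact (card_le_univ _).trans (by simp)

lemma le_winst {n : ℕ} (t : ℕ) (f : (Fin n → Bool) → Bool) (x : Fin n → Bool) (L : List (Fin n))
    (hL : L.Nodup) (hall : ∀ i, i ∈ L) (hx : wt x = t + 1)
    (hw : f x = true ∨ f (fun i => !x i) = false) : walkJumps f x L ≤ winst t f := by
  obtain ⟨P, hP, h0, hj, hl⟩ := list_to_geodesic f x L hL hall
  exact le_csSup (bddAbove_winst t f) ⟨P, hP, by rw [h0]; exact hx, by rwa [h0, hl], hj.symm⟩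

/-- The condition `t_f = t` is witnessed just outside one of the two balls. -/
lemma exists_witness {n t : ℕ} {f : (Fin n → Bool) → Bool} (hf : tfEq f t) :
    ∃ x, (wt x = t + 1 ∧ f x = true) ∨ (zerosCount x = t + 1 ∧ f x = false) := by
  obtain ⟨⟨h0, h1⟩, h2⟩ := hf
  by_contra! hcon
  apply h2
  constructor
  · intro x hx
    by_contra hne
    have h3 : ¬ onesCount x ≤ t := fun h => hne (h0 x h)
    have := (hcon x).1 (by rw [← onesCount_eq]; omega)
    simp_all
  · intro x hx
    by_contra hne
    have h3 : ¬ zerosCount x ≤ t := fun h => hne (h1 x h)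
    have := (hcon x).2 (by omega)
    simp_all

/-- For `t_f = t` the set defining `winst t f` is nonempty, so its supremum is attained. -/
lemma exists_winst {n t : ℕ} {f : (Fin n → Bool) → Bool} (hf : tfEq f t) :
    ∃ x : Fin n → Bool, ∃ L : List (Fin n), L.Nodup ∧ (∀ i, i ∈ L) ∧ wt x = t + 1 ∧
      (f x = true ∨ f (fun i => !x i) = false) ∧ walkJumps f x L = winst t f := by
  have hstart : ∃ x, wt x = t + 1 ∧ (f x = true ∨ f (fun i => !x i) = false) := by
    obtain ⟨x, ⟨h1, h2⟩ | ⟨h1, h2⟩⟩ := exists_witness hf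
    · exact ⟨x, h1, Or.inl h2⟩
    · exact ⟨fun i => !x i, by rw [← zerosCount_eq, h1], Or.inr (by simpa using h2)⟩
  obtain ⟨x, hx, hw⟩ := hstart
  obtain ⟨P, hP, hP0, -, hl⟩ :=
    list_to_geodesic f x _ (List.nodup_finRange n) (List.mem_finRange)
  have hmem := Nat.sSup_mem (s := {m | ∃ P : Fin (n+1) → Fin n → Bool, IsGeodesic P ∧
      onesCount (P 0) = t + 1 ∧ (f (P 0) = true ∨ f (P (Fin.last n)) = false) ∧ m = jumps f P})
    ⟨_, P, hP, by rw [hP0]; exact hx, by rwa [hP0, hl], rfl⟩ (bddAbove_winst t f)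
  obtain ⟨P, hP, h1, h2, h3⟩ := hmem
  obtain ⟨L, hL, hall, hj, hl⟩ := geodesic_to_list f P hP
  exact ⟨P 0, L, hL, hall, h1, by rwa [← hl], by rw [hj, winst, h3]⟩

/-! ### One step -/

lemma flip_comp {ι κ : Type*} [DecidableEq ι] [DecidableEq κ] (e : ι ≃ κ) (z : κ → Bool) (k : κ) :
    flip (z ∘ e) (e.symm k) = flip z k ∘ e := by
  funext i
  by_cases h : i = e.symm k
  · subst h; simp [flip]
  · have : e i ≠ k := fun h' => h (by simp [← h'])
    simp [flip, h, this]

lemma walkJumps_comp {ι κ : Type*} [DecidableEq ι] [DecidableEq κ] (e : ι ≃ κ)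
    (f : (ι → Bool) → Bool) (z : κ → Bool) (L : List κ) :
    walkJumps f (z ∘ e) (L.map e.symm) = walkJumps (fun z => f (z ∘ e)) z L := by
  induction L generalizing z with
  | nil => rfl
  | cons k L ih => simp [walkJumps, flip_comp, ih]

lemma wt_comp {ι κ : Type*} [Fintype ι] [Fintype κ] [DecidableEq ι] [DecidableEq κ] (e : ι ≃ κ)
    (z : κ → Bool) : wt (z ∘ e) = wt z := by
  rw [wt_eq_sum, wt_eq_sum]
  exact e.sum_comp fun k => (z k).toNat

lemma exists_equiv {ι κ : Type*} [Fintype ι] [Fintype κ] [DecidableEq ι] [DecidableEq κ]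
    (x : ι → Bool) (z : κ → Bool) (hc : Fintype.card ι = Fintype.card κ) (hw : wt x = wt z) :
    ∃ e : ι ≃ κ, z ∘ e = x := by
  have h : ∀ b, Nonempty ({i // x i = b} ≃ {k // z k = b}) := by
    intro b
    refine ⟨Fintype.equivOfCardEq ?_⟩
    rw [Fintype.card_subtype, Fintype.card_subtype]
    cases b with
    | true => simpa only [wt] using hw
    | false =>
      have h1 := wt_compl x
      have h2 := wt_compl z
      simp only [wt, Bool.not_eq_true'] at h1 h2 hw
      omega
  let E := fun b => (h b).some
  exact ⟨Equiv.ofFiberEquiv E, funext fun i => Equiv.ofFiberEquiv_map E i⟩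

lemma exists_wt (n m : ℕ) (h : m ≤ n) : ∃ y : Fin n → Bool, wt y = m := by
  obtain ⟨A, -, hA⟩ := exists_subset_card_eq (s := (univ : Finset (Fin n))) (n := m) (by simpa)
  exact ⟨fun i => decide (i ∈ A), by simp [wt, hA]⟩

/-- Increasing `t` by `s = n - 2t` and `n` by `2s` increases the minimum of `winst` by at
least `2`. -/
lemma winst_step (n0 t0 s y0 N T : ℕ) (hs : 1 ≤ s) (hn0 : n0 = 2 * t0 + s) (hN : N = n0 + 2 * s)
    (hT : T = t0 + s)
    (h : ∀ f0 : (Fin n0 → Bool) → Bool, tfEq f0 t0 → y0 ≤ winst t0 f0)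
    (f : (Fin N → Bool) → Bool) (hf : tfEq f T) : y0 + 2 ≤ winst T f := by
  obtain ⟨x, hx⟩ := exists_witness hf
  have hxz := zerosCount_add x
  obtain ⟨p, hp⟩ := exists_wt n0 (wt x - s) (by omega)
  obtain ⟨e, he⟩ := exists_equiv x (Sum.elim p (word s true)) (by simp; omega)
    (by rw [wt_elim]; omega)
  let F : (Fin n0 ⊕ (Fin s ⊕ Fin s) → Bool) → Bool := fun z => f (z ∘ e)
  have hF0 : ∀ z, wt z ≤ t0 + s → F z = false := fun z hz =>
    hf.1.1 _ (by rw [onesCount_eq, wt_comp]; omega)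
  have hF1 : ∀ z, t0 + s + s ≤ wt z → F z = true := fun z hz =>
    hf.1.2 _ (by have := zerosCount_add (z ∘ e); rw [wt_comp] at this; omega)
  let c : Fin n0 := ⟨0, by omega⟩
  -- With this `d`, the extension of `p` is the witness `x`.
  let d : Bool := !p c
  have hpx : restrict F c d p = f x := by
    simp only [restrict, d, F]
    rw [show (p c ^^ !p c) = true by cases p c <;> rfl, he]
  have hg : tfEq (restrict F c d) t0 := by
    refine ⟨⟨fun y hy => hF0 _ ?_, fun y hy => hF1 _ ?_⟩, fun hR => ?_⟩
    · rw [onesCount_eq] at hy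
      rw [wt_elim]; omega
    · have := zerosCount_add y
      rw [wt_elim]; omega
    · have hpz := zerosCount_add p
      rcases hx with ⟨h1, h2⟩ | ⟨h1, h2⟩
      · have := hR.1 p (by rw [onesCount_eq]; omega)
        rw [hpx, h2] at this
        simp at this
      · have := hR.2 p (by omega)
        rw [hpx, h2] at this
        simp at this
  obtain ⟨y, L, hL, hall, hy, hw, hj⟩ := exists_winst hg
  obtain ⟨L', hL', hall', hj'⟩ := exists_lift F c d t0 hF0 hF1 y (by omega) (by omega) L hL hall
  have hy0 := h _ hg
  have key := le_winst T f (Sum.elim y (word s (y c ^^ d)) ∘ e) (L'.map e.symm)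
    (hL'.map e.symm.injective)
    (fun i => List.mem_map.2 ⟨e i, hall' _, by simp⟩)
    (by rw [wt_comp, wt_elim]; omega) ?_
  · rw [walkJumps_comp] at key
    exact le_trans (by omega) (hj'.trans key)
  · refine hw.imp id fun hw => ?_
    have hcompl : (fun i => !(Sum.elim y (word s (y c ^^ d)) ∘ e) i)
        = Sum.elim (fun i => !y i) (word s ((!y c) ^^ d)) ∘ e := by
      funext i
      simp only [Function.comp]
      rcases e i with j | j | j <;> simp [word]
    rw [hcompl]
    exact hw

end Strips

/-- If `t ≥ t₀`, `n ≥ 2t+1`, `n - 2t` divides `t - t₀`, and every colouring `f₀` of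
`H_{n - 2(t-t₀)}` with `t_{f₀} = t₀` satisfies `winst f₀ ≥ y₀`, then every colouring
`f` of `H_n` with `t_f = t` satisfies `winst f ≥ y₀ + 2(t-t₀)/(n-2t)`. -/
theorem winst_morestrips (n y0 t0 t : ℕ) (ht : t0 ≤ t) (hn : 2 * t + 1 ≤ n)
    (hdvd : (n - 2 * t) ∣ (t - t0))
    (h : ∀ f0 : (Fin (n - 2 * (t - t0)) → Bool) → Bool, tfEq f0 t0 → y0 ≤ winst t0 f0) :
    ∀ f : (Fin n → Bool) → Bool, tfEq f t →
      y0 + 2 * ((t - t0) / (n - 2 * t)) ≤ winst t f := by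
  intro f hf
  obtain ⟨k, hk⟩ := hdvd
  obtain ⟨s, hs⟩ : ∃ s, s = n - 2 * t := ⟨_, rfl⟩
  rw [← hs] at hk ⊢
  have hs1 : 1 ≤ s := by omega
  rw [hk, Nat.mul_div_cancel_left _ hs1]
  have main : ∀ k N T, N = n - 2 * (t - t0) + 2 * (s * k) → T = t0 + s * k →
      ∀ f : (Fin N → Bool) → Bool, tfEq f T → y0 + 2 * k ≤ winst T f := by
    intro k
    induction k with
    | zero =>
      intro N T hN hT
      simp only [Nat.mul_zero, Nat.add_zero] at hN hT
      subst hN hT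
      simpa using h
    | succ k ih =>
      intro N T hN hT f hf
      rw [Nat.mul_succ] at hN hT
      exact Strips.winst_step (n - 2 * (t - t0) + 2 * (s * k)) (t0 + s * k) s (y0 + 2 * k) N T hs1
        (by omega) (by omega) (by omega) (ih _ _ rfl rfl) f hf
  exact main k n t (by omega) (by omega) f hf
end
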